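/- Let X_n(x) = max{S_k(x) : S_k(x) ≤ n, k ≥ 0} where S_k = a_1 + ⋯ + a_k are continued fraction digit sums. Then log(n - X_n)/log(n) converges in distribution, with respect to Lebesgue measure on [0,1], to a random variable uniformly distributed on [0,1]. -/

import Mathlib

open MeasureTheory Filter

/-- The Gauss map `G(x) = 1/x - ⌊1/x⌋` (with `G 0 = 0`). -/
noncomputable def gaussMap (x : ℝ) : ℝ := if x = 0 then 0 else Int.fract (1 / x)

/-- The digit sum `S_k = a_1 + ⋯ + a_k` of continued fraction digits, `a_{i+1}(x) =
⌊1 / Gⁱ(x)⌋`. -/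
noncomputable def cfDigitSum (x : ℝ) (k : ℕ) : ℕ :=
  ∑ i ∈ Finset.range k, (⌊1 / (gaussMap^[i] x)⌋).toNat

/-- `X_n(x) = max{S_k(x) : S_k(x) ≤ n, k ∈ ℕ₀}`. -/
noncomputable def Xproc (n : ℕ) (x : ℝ) : ℕ :=
  sSup {m : ℕ | m ≤ n ∧ ∃ k : ℕ, cfDigitSum x k = m}

/-!
The Farey map `F` lowers the first continued fraction digit by one, so that on `[0, 1]`
`X_{s+m}(x) ≤ s` if and only if `F^s x ≤ 1 / (m + 1)`. Under Lebesgue measure the law of `F^s` has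
density `g_s(y) / y`, where `g_0(y) = y` and `g_{s+1} = T g_s` for the transfer operator `T` of `F`
relative to its infinite invariant measure `dy / y`. In the coordinate `y / (1 + y)` this operator
averages a function with its reflection, hence every `g_s` is nonnegative, increasing and concave.
It follows that `g_s(1) * s y / (s y + 1) ≤ g_s(y) ≤ g_s(1)`, and integrating against `dy / y`
gives `P(F^s > a) ≈ g_s(1) log(1 / a)` for `1 / s ≤ a ≤ 1`. Since `P(F^s ≤ a) ≤ (s + 1) a`, almost
all of the mass lies above a slightly smaller `a`, which forces `g_s(1) ~ 1 / log s`. Therefore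
`P(X_{s+m} > s)` is close to `log m / log s` for `m ≤ s`, and the uniform law is the case
`m ≈ n^t`, `s = n - m`.
-/

open ProbabilityTheory Set Topology Asymptotics

variable {n : ℕ} {a t x y z : ℝ} {g : ℝ → ℝ}

/-! ### The Farey map -/

/-- The Farey map, the slow version of `gaussMap`: it lowers the first continued fraction digit
by one, and deletes it once it is equal to one. -/
noncomputable def fareyMap (x : ℝ) : ℝ := if x ≤ 1 / 2 then x / (1 - x) else (1 - x) / x

lemma fareyMap_mem_Icc (hx : x ∈ Icc (0 : ℝ) 1) : fareyMap x ∈ Icc (0 : ℝ) 1 := by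
  obtain ⟨hx0, hx1⟩ := hx
  unfold fareyMap
  split_ifs with h
  · exact ⟨div_nonneg hx0 (by linarith), (div_le_one (by linarith)).2 (by linarith)⟩
  · exact ⟨div_nonneg (by linarith) hx0, (div_le_one (by linarith)).2 (by linarith)⟩

lemma mapsTo_iterate_fareyMap (n : ℕ) : MapsTo fareyMap^[n] (Icc 0 1) (Icc 0 1) :=
  MapsTo.iterate (fun _ ↦ fareyMap_mem_Icc) n

lemma measurable_fareyMap : Measurable fareyMap :=
  Measurable.ite measurableSet_Iic (by fun_prop) (by fun_prop)

lemma div_one_add_mem_Icc (hz : z ∈ Icc (0 : ℝ) 1) : z / (1 + z) ∈ Icc (0 : ℝ) (1 / 2) := by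
  obtain ⟨hz0, hz1⟩ := hz
  refine ⟨by positivity, ?_⟩
  rw [div_le_div_iff₀ (by linarith) two_pos]
  linarith

lemma one_div_one_add_mem_Icc (hz : z ∈ Icc (0 : ℝ) 1) : 1 / (1 + z) ∈ Icc (1 / 2 : ℝ) 1 := by
  obtain ⟨hz0, hz1⟩ := hz
  exact ⟨one_div_le_one_div_of_le (by linarith) (by linarith),
    (div_le_one (by linarith)).2 (by linarith)⟩

lemma fareyMap_le_iff (hz : z ∈ Icc (0 : ℝ) 1) :
    fareyMap x ≤ z ↔ x ≤ z / (1 + z) ∨ 1 / (1 + z) ≤ x := by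
  have hs := (div_one_add_mem_Icc hz).2
  have hr := (one_div_one_add_mem_Icc hz).1
  obtain ⟨hz0, hz1⟩ := hz
  unfold fareyMap
  split_ifs with h
  · have hleft : x / (1 - x) ≤ z ↔ x ≤ z / (1 + z) := by
      rw [div_le_iff₀ (by linarith), le_div_iff₀ (by linarith)]
      constructor <;> intro <;> linarith
    rw [hleft, iff_self_or]
    intro hx'
    have : z = 1 := by
      rw [div_le_iff₀ (by linarith)] at hx'
      nlinarith
    subst this
    linarith
  · rw [or_iff_right (by linarith), div_le_iff₀ (by linarith), div_le_iff₀ (by linarith)]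
    constructor <;> intro <;> linarith

lemma fareyMap_preimage_singleton_subset (z : ℝ) :
    fareyMap ⁻¹' {z} ⊆ {z / (1 + z), 1 / (1 + z)} := by
  rintro x rfl
  by_cases h : x ≤ 1 / 2
  · have : 1 - x ≠ 0 := by linarith
    left
    simp only [fareyMap, if_pos h]
    field_simp
    ring
  · have : x ≠ 0 := by linarith
    right
    simp only [fareyMap, if_neg h, mem_singleton_iff]
    field_simp
    ring

section Law

variable {μ : Measure ℝ}

lemma nullSingletonClass_map_fareyMap [NullSingletonClass μ] :
    NullSingletonClass (μ.map fareyMap) where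
  measure_singleton z := by
    rw [Measure.map_apply measurable_fareyMap (measurableSet_singleton z)]
    exact measure_mono_null (fareyMap_preimage_singleton_subset z) ((toFinite _).measure_zero μ)

lemma cdf_map_fareyMap [IsProbabilityMeasure μ] [NullSingletonClass μ]
    (hz : z ∈ Icc (0 : ℝ) 1) :
    cdf (μ.map fareyMap) z = cdf μ (z / (1 + z)) + (1 - cdf μ (1 / (1 + z))) := by
  have := Measure.isProbabilityMeasure_map (μ := μ) measurable_fareyMap.aemeasurable
  have hsr : z / (1 + z) ≤ 1 / (1 + z) :=
    (div_one_add_mem_Icc hz).2.trans (one_div_one_add_mem_Icc hz).1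
  have hpre : fareyMap ⁻¹' Iic z = Iic (z / (1 + z)) ∪ Ici (1 / (1 + z)) :=
    Set.ext fun _ ↦ fareyMap_le_iff hz
  calc cdf (μ.map fareyMap) z
      = μ.real (Iic (z / (1 + z)) ∪ Ioi (1 / (1 + z))) := by
        rw [cdf_eq_real, map_measureReal_apply measurable_fareyMap measurableSet_Iic, hpre]
        exact measureReal_congr ((ae_eq_refl _).union Ioi_ae_eq_Ici.symm)
    _ = μ.real (Iic (z / (1 + z))) + μ.real (Ioi (1 / (1 + z))) :=
        measureReal_union (Iic_disjoint_Ioi hsr) measurableSet_Ioi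
    _ = cdf μ (z / (1 + z)) + (1 - cdf μ (1 / (1 + z))) := by
        rw [← compl_Iic, probReal_compl_eq_one_sub measurableSet_Iic, ← cdf_eq_real, ← cdf_eq_real]

lemma continuous_cdf [IsProbabilityMeasure μ] [NullSingletonClass μ] : Continuous (cdf μ) := by
  refine continuous_iff_continuousAt.2 fun x ↦ ?_
  have hjump : cdf μ x ≤ Function.leftLim (cdf μ) x := by
    have := (cdf μ).measure_singleton x
    rwa [measure_cdf, measure_singleton, eq_comm, ENNReal.ofReal_eq_zero, sub_nonpos] at this
  rw [(monotone_cdf μ).continuousAt_iff_leftLim_eq_rightLim, StieltjesFunction.rightLim_eq]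
  exact ((monotone_cdf μ).leftLim_le le_rfl).antisymm hjump

end Law

/-- The law of `fareyMap^[n] x` for `x` uniformly distributed on `[0, 1]`. -/
noncomputable def fareyLaw (n : ℕ) : Measure ℝ :=
  (volume.restrict (Icc 0 1)).map fareyMap^[n]

instance instIsProbabilityMeasureFareyLaw (n : ℕ) : IsProbabilityMeasure (fareyLaw n) :=
  have : IsProbabilityMeasure (volume.restrict (Icc (0 : ℝ) 1)) := ⟨by simp⟩
  Measure.isProbabilityMeasure_map (measurable_fareyMap.iterate n).aemeasurable

lemma fareyLaw_zero : fareyLaw 0 = volume.restrict (Icc 0 1) := Measure.map_id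

lemma fareyLaw_succ (n : ℕ) : fareyLaw (n + 1) = (fareyLaw n).map fareyMap := by
  rw [fareyLaw, fareyLaw, Measure.map_map measurable_fareyMap (measurable_fareyMap.iterate n),
    Function.iterate_succ']

instance instNullSingletonClassFareyLaw (n : ℕ) : NullSingletonClass (fareyLaw n) := by
  induction n with
  | zero => rw [fareyLaw_zero]; infer_instance
  | succ n ih => rw [fareyLaw_succ]; exact nullSingletonClass_map_fareyMap

lemma ae_fareyLaw_mem_Icc (n : ℕ) : ∀ᵐ x ∂fareyLaw n, x ∈ Icc 0 1 :=
  (ae_map_iff (measurable_fareyMap.iterate n).aemeasurable measurableSet_Icc).2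
    ((ae_restrict_mem measurableSet_Icc).mono (mapsTo_iterate_fareyMap n))

lemma cdf_fareyLaw_zero (hz : z ∈ Icc (0 : ℝ) 1) : cdf (fareyLaw 0) z = z := by
  rw [cdf_eq_real, fareyLaw_zero, measureReal_restrict_apply measurableSet_Iic, inter_comm,
    ← Ici_inter_Iic, inter_assoc, Iic_inter_Iic, min_eq_right hz.2, Ici_inter_Iic,
    Real.volume_real_Icc_of_le hz.1, sub_zero]

lemma cdf_fareyLaw_succ (n : ℕ) (hz : z ∈ Icc (0 : ℝ) 1) :
    cdf (fareyLaw (n + 1)) z =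
      cdf (fareyLaw n) (z / (1 + z)) + (1 - cdf (fareyLaw n) (1 / (1 + z))) := by
  rw [fareyLaw_succ, cdf_map_fareyMap hz]

lemma cdf_fareyLaw_one (n : ℕ) : cdf (fareyLaw n) 1 = 1 := by
  rw [cdf_eq_real, measureReal_congr (t := univ), probReal_univ]
  filter_upwards [ae_fareyLaw_mem_Icc n] with x hx
  exact propext (iff_of_true hx.2 trivial)

/-! ### The transfer operator -/

/-- The transfer operator of the Farey map with respect to its invariant measure `dy / y`. -/
noncomputable def fareyTransfer (g : ℝ → ℝ) (y : ℝ) : ℝ :=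
  (g (y / (1 + y)) + y * g (1 / (1 + y))) / (1 + y)

/-- The average of `g s` and `g (1 - s)` with weights `1 - s` and `s`. In the coordinate
`s = y / (1 + y)` it is `fareyTransfer g`. -/
def reflectionAverage (g : ℝ → ℝ) (s : ℝ) : ℝ := (1 - s) * g s + s * g (1 - s)

lemma fareyTransfer_eq_reflectionAverage (hy : 0 ≤ y) :
    fareyTransfer g y = reflectionAverage g (y / (1 + y)) := by
  have hreflect : 1 - y / (1 + y) = 1 / (1 + y) := by field_simp; ring
  rw [fareyTransfer, reflectionAverage, hreflect]
  field_simp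

lemma reflectionAverage_one_sub (g : ℝ → ℝ) (s : ℝ) :
    reflectionAverage g (1 - s) = reflectionAverage g s := by
  rw [reflectionAverage, reflectionAverage, sub_sub_cancel, add_comm]

lemma concaveOn_reflectionAverage (hg0 : ∀ y ∈ Icc (0 : ℝ) 1, 0 ≤ g y)
    (hmono : MonotoneOn g (Icc 0 1)) (hconc : ConcaveOn ℝ (Icc 0 1) g) :
    ConcaveOn ℝ (Icc 0 1) (reflectionAverage g) := by
  have hflip : ∀ s ∈ Icc (0 : ℝ) 1, 1 - s ∈ Icc (0 : ℝ) 1 :=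
    fun s hs ↦ ⟨sub_nonneg.2 hs.2, sub_le_self 1 hs.1⟩
  have hconc' : ConcaveOn ℝ (Icc 0 1) fun s ↦ g (1 - s) := by
    refine ⟨convex_Icc 0 1, fun x hx y hy p q hp hq hpq ↦ ?_⟩
    convert hconc.2 (hflip x hx) (hflip y hy) hp hq hpq using 2
    simp only [smul_eq_mul]
    linear_combination -hpq
  have hlin : ConcaveOn ℝ (Icc 0 1) fun s : ℝ ↦ 1 - s :=
    (concaveOn_const 1 (convex_Icc 0 1)).sub (convexOn_id (convex_Icc 0 1))
  refine (hlin.mul hconc (fun s hs ↦ sub_nonneg.2 hs.2) hg0 ?_).add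
    ((concaveOn_id (convex_Icc 0 1)).mul hconc' (fun s hs ↦ hs.1)
      (fun s hs ↦ hg0 _ (hflip s hs)) ?_)
  · refine AntitoneOn.antivaryOn ?_ hmono
    exact fun s _ t _ hst ↦ sub_le_sub_left hst 1
  · refine MonotoneOn.antivaryOn monotoneOn_id ?_
    exact fun s hs t ht hst ↦ hmono (hflip t ht) (hflip s hs) (sub_le_sub_left hst 1)

lemma monotoneOn_reflectionAverage (hconc : ConcaveOn ℝ (Icc 0 1) (reflectionAverage g)) :
    MonotoneOn (reflectionAverage g) (Icc 0 (1 / 2)) := by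
  rintro s ⟨hs0, hs⟩ t ⟨_, ht⟩ hst
  have hmin := hconc.min_le_of_mem_Icc (x := s) (y := 1 - s) (z := t) ⟨hs0, by linarith⟩
    ⟨by linarith, by linarith⟩ ⟨hst, by linarith⟩
  rwa [reflectionAverage_one_sub, min_self] at hmin

lemma concaveOn_div_one_add : ConcaveOn ℝ (Icc 0 1) fun y : ℝ ↦ y / (1 + y) := by
  have hinv : ConvexOn ℝ (Icc 0 1) fun y : ℝ ↦ (1 + y)⁻¹ := by
    have := (convexOn_zpow (𝕜 := ℝ) (-1)).translate_right 1
    simp only [Function.comp_def, zpow_neg_one] at this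
    exact this.subset (fun y hy ↦ show 0 < 1 + y by linarith [hy.1]) (convex_Icc 0 1)
  refine ((concaveOn_const 1 (convex_Icc 0 1)).sub hinv).congr fun y hy ↦ ?_
  have : 1 + y ≠ 0 := by linarith [hy.1]
  simp only [Pi.sub_apply]
  field_simp
  ring

lemma image_div_one_add_Icc : (fun y : ℝ ↦ y / (1 + y)) '' Icc 0 1 = Icc 0 (1 / 2) := by
  refine Subset.antisymm (image_subset_iff.2 fun y ↦ div_one_add_mem_Icc) ?_
  rintro s ⟨hs0, hs⟩
  refine ⟨s / (1 - s), ⟨div_nonneg hs0 (by linarith),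
    (div_le_one (by linarith)).2 (by linarith)⟩, ?_⟩
  have : 1 - s ≠ 0 := by linarith
  field_simp
  ring

lemma fareyTransfer_nonneg (hg0 : ∀ y ∈ Icc (0 : ℝ) 1, 0 ≤ g y) :
    ∀ y ∈ Icc (0 : ℝ) 1, 0 ≤ fareyTransfer g y := by
  intro y hy
  have hs := div_one_add_mem_Icc hy
  have hr := one_div_one_add_mem_Icc hy
  have hgs := hg0 (y / (1 + y)) ⟨hs.1, by linarith [hs.2]⟩
  have hgr := hg0 (1 / (1 + y)) ⟨by linarith [hr.1], hr.2⟩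
  have hy0 := hy.1
  rw [fareyTransfer]
  positivity

lemma monotoneOn_fareyTransfer (hconc : ConcaveOn ℝ (Icc 0 1) (reflectionAverage g)) :
    MonotoneOn (fareyTransfer g) (Icc 0 1) := by
  intro x hx y hy hxy
  have hx0 := hx.1
  rw [fareyTransfer_eq_reflectionAverage hx0, fareyTransfer_eq_reflectionAverage hy.1]
  refine monotoneOn_reflectionAverage hconc (div_one_add_mem_Icc hx) (div_one_add_mem_Icc hy) ?_
  rw [div_le_div_iff₀ (by linarith) (by linarith)]
  linarith

lemma concaveOn_fareyTransfer (hconc : ConcaveOn ℝ (Icc 0 1) (reflectionAverage g)) :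
    ConcaveOn ℝ (Icc 0 1) (fareyTransfer g) := by
  have hcomp : ConcaveOn ℝ (Icc 0 1) (reflectionAverage g ∘ fun y ↦ y / (1 + y)) := by
    refine ConcaveOn.comp ?_ concaveOn_div_one_add ?_ <;> rw [image_div_one_add_Icc]
    · exact hconc.subset (Icc_subset_Icc_right (by norm_num)) (convex_Icc _ _)
    · exact monotoneOn_reflectionAverage hconc
  exact hcomp.congr fun y hy ↦ (fareyTransfer_eq_reflectionAverage hy.1).symm

lemma fareyTransfer_one (g : ℝ → ℝ) : fareyTransfer g 1 = g (1 / 2) := by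
  rw [fareyTransfer, one_add_one_eq_two]
  ring

/-- The density of `fareyLaw n` with respect to the invariant measure `dy / y` of the Farey map. -/
noncomputable def fareyDensity (n : ℕ) : ℝ → ℝ := fareyTransfer^[n] id

lemma fareyDensity_zero (y : ℝ) : fareyDensity 0 y = y := rfl

lemma fareyDensity_succ (n : ℕ) : fareyDensity (n + 1) = fareyTransfer (fareyDensity n) :=
  Function.iterate_succ_apply' ..

-- Concavity is what makes monotonicity propagate along the induction.
lemma fareyDensity_nonneg_and_monotoneOn_and_concaveOn (n : ℕ) :
    (∀ y ∈ Icc (0 : ℝ) 1, 0 ≤ fareyDensity n y) ∧ MonotoneOn (fareyDensity n) (Icc 0 1) ∧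
      ConcaveOn ℝ (Icc 0 1) (fareyDensity n) := by
  induction n with
  | zero => exact ⟨fun y hy ↦ hy.1, monotoneOn_id, concaveOn_id (convex_Icc 0 1)⟩
  | succ n ih =>
    obtain ⟨hnonneg, hmono, hconc⟩ := ih
    have havg := concaveOn_reflectionAverage hnonneg hmono hconc
    rw [fareyDensity_succ]
    exact ⟨fareyTransfer_nonneg hnonneg, monotoneOn_fareyTransfer havg,
      concaveOn_fareyTransfer havg⟩

lemma monotoneOn_fareyDensity (n : ℕ) : MonotoneOn (fareyDensity n) (Icc 0 1) :=
  (fareyDensity_nonneg_and_monotoneOn_and_concaveOn n).2.1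

lemma fareyDensity_one_nonneg (n : ℕ) : 0 ≤ fareyDensity n 1 :=
  (fareyDensity_nonneg_and_monotoneOn_and_concaveOn n).1 1 (right_mem_Icc.2 zero_le_one)

lemma fareyDensity_le_fareyDensity_one (n : ℕ) (hy : y ∈ Icc (0 : ℝ) 1) :
    fareyDensity n y ≤ fareyDensity n 1 :=
  monotoneOn_fareyDensity n hy (right_mem_Icc.2 zero_le_one) hy.2

lemma fareyDensity_succ_one (n : ℕ) : fareyDensity (n + 1) 1 = fareyDensity n (1 / 2) := by
  rw [fareyDensity_succ, fareyTransfer_one]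

lemma antitone_fareyDensity_one : Antitone fun n ↦ fareyDensity n 1 := by
  refine antitone_nat_of_succ_le fun n ↦ ?_
  rw [fareyDensity_succ_one]
  exact fareyDensity_le_fareyDensity_one n ⟨by norm_num, by norm_num⟩

lemma fareyDensity_one_le_one (n : ℕ) : fareyDensity n 1 ≤ 1 :=
  antitone_fareyDensity_one n.zero_le

lemma fareyDensity_one_mul_le (n : ℕ) (hy : y ∈ Icc (0 : ℝ) 1) :
    fareyDensity n 1 * (n * y / (n * y + 1)) ≤ fareyDensity n y := by
  induction n generalizing y with
  | zero => simpa [fareyDensity_zero] using hy.1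
  | succ n ih =>
    have hs := div_one_add_mem_Icc hy
    have hr := one_div_one_add_mem_Icc hy
    have hy0 := hy.1
    have hleft : fareyDensity (n + 1) 1 * (n * y / ((n + 1) * y + 1)) ≤
        fareyDensity n (y / (1 + y)) := by
      have hfrac : n * (y / (1 + y)) / (n * (y / (1 + y)) + 1) = n * y / ((n + 1) * y + 1) := by
        field_simp
        ring
      rw [← hfrac]
      exact (mul_le_mul_of_nonneg_right (antitone_fareyDensity_one n.le_succ)
        (by positivity)).trans (ih ⟨hs.1, by linarith [hs.2]⟩)
    have hright : fareyDensity (n + 1) 1 ≤ fareyDensity n (1 / (1 + y)) := by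
      rw [fareyDensity_succ_one]
      exact monotoneOn_fareyDensity n ⟨by norm_num, by norm_num⟩ ⟨by linarith [hr.1], hr.2⟩ hr.1
    calc fareyDensity (n + 1) 1 * ((n + 1 : ℕ) * y / ((n + 1 : ℕ) * y + 1))
        = (fareyDensity (n + 1) 1 * (n * y / ((n + 1) * y + 1)) +
            y * fareyDensity (n + 1) 1) / (1 + y) := by
          push_cast
          field_simp
          ring
      _ ≤ (fareyDensity n (y / (1 + y)) + y * fareyDensity n (1 / (1 + y))) / (1 + y) := by
          gcongr
      _ = fareyDensity (n + 1) y := by rw [fareyDensity_succ, fareyTransfer]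

/-! ### Asymptotics of the law of the Farey iterates -/

lemma hasDerivAt_cdf_fareyLaw (n : ℕ) (hy : y ∈ Ioo (0 : ℝ) 1) :
    HasDerivAt (cdf (fareyLaw n)) (fareyDensity n y / y) y := by
  induction n generalizing y with
  | zero =>
    rw [fareyDensity_zero, div_self hy.1.ne']
    refine (hasDerivAt_id y).congr_of_eventuallyEq ?_
    filter_upwards [Icc_mem_nhds hy.1 hy.2] with z hz using cdf_fareyLaw_zero hz
  | succ n ih =>
    obtain ⟨hy0, hy1⟩ := hy
    have hden : 1 + y ≠ 0 := by positivity
    have hdden : HasDerivAt (fun z : ℝ ↦ 1 + z) 1 y := (hasDerivAt_id y).const_add 1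
    have hs : y / (1 + y) ∈ Ioo (0 : ℝ) 1 :=
      ⟨by positivity, (div_lt_one (by positivity)).2 (by linarith)⟩
    have hr : 1 / (1 + y) ∈ Ioo (0 : ℝ) 1 :=
      ⟨by positivity, (div_lt_one (by positivity)).2 (by linarith)⟩
    have hleft := (ih hs).comp y ((hasDerivAt_id y).div hdden hden)
    have hright := (ih hr).comp y ((hasDerivAt_const y (1 : ℝ)).div hdden hden)
    refine ((hleft.add (hright.const_sub 1)).congr_of_eventuallyEq ?_).congr_deriv ?_
    · filter_upwards [Icc_mem_nhds hy0 hy1] with z hz using cdf_fareyLaw_succ n hz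
    · simp only [fareyDensity_succ, fareyTransfer, id]
      field_simp
      ring

lemma le_of_hasDerivAt_nonneg {f f' : ℝ → ℝ} {a b : ℝ} (hab : a ≤ b)
    (hf : ContinuousOn f (Icc a b)) (hf' : ∀ x ∈ Ioo a b, HasDerivAt f (f' x) x)
    (hf'0 : ∀ x ∈ Ioo a b, 0 ≤ f' x) : f a ≤ f b := by
  rw [← interior_Icc] at hf' hf'0
  exact monotoneOn_of_hasDerivWithinAt_nonneg (convex_Icc a b) hf
    (fun x hx ↦ (hf' x hx).hasDerivWithinAt) hf'0 (left_mem_Icc.2 hab) (right_mem_Icc.2 hab) hab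

lemma one_sub_cdf_fareyLaw_le (n : ℕ) (ha : a ∈ Ioc (0 : ℝ) 1) :
    1 - cdf (fareyLaw n) a ≤ fareyDensity n 1 * -Real.log a := by
  have hpos : ∀ {y}, y ∈ Icc a 1 → 0 < y := fun hy ↦ ha.1.trans_le hy.1
  have hle := le_of_hasDerivAt_nonneg
    (f := fun y ↦ fareyDensity n 1 * Real.log y - cdf (fareyLaw n) y)
    (f' := fun y ↦ fareyDensity n 1 * y⁻¹ - fareyDensity n y / y) ha.2
    ((continuousOn_const.mul (Real.continuousOn_log.mono fun y hy ↦ (hpos hy).ne')).sub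
      continuous_cdf.continuousOn)
    (fun y hy ↦ ((Real.hasDerivAt_log (hpos (Ioo_subset_Icc_self hy)).ne').const_mul _).sub
      (hasDerivAt_cdf_fareyLaw n ⟨ha.1.trans hy.1, hy.2⟩))
    (fun y hy ↦ by
      have hy0 := ha.1.trans hy.1
      rw [← div_eq_mul_inv, sub_nonneg]
      exact div_le_div_of_nonneg_right
        (fareyDensity_le_fareyDensity_one n ⟨hy0.le, hy.2.le⟩) hy0.le)
  simp only [Real.log_one, cdf_fareyLaw_one] at hle
  linarith

lemma le_one_sub_cdf_fareyLaw (n : ℕ) (ha : a ∈ Icc (0 : ℝ) 1) :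
    fareyDensity n 1 * (Real.log (n + 1) - Real.log (n * a + 1)) ≤ 1 - cdf (fareyLaw n) a := by
  have hpos : ∀ {y}, y ∈ Icc a 1 → 0 < n * y + 1 := fun {y} hy ↦ by
    have : 0 ≤ y := ha.1.trans hy.1
    positivity
  have hle := le_of_hasDerivAt_nonneg
    (f := fun y ↦ cdf (fareyLaw n) y - fareyDensity n 1 * Real.log (n * y + 1))
    (f' := fun y ↦ fareyDensity n y / y - fareyDensity n 1 * (n / (n * y + 1))) ha.2
    (continuous_cdf.continuousOn.sub (continuousOn_const.mul
      (ContinuousOn.log (by fun_prop) fun y hy ↦ (hpos hy).ne')))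
    (fun y hy ↦ (hasDerivAt_cdf_fareyLaw n ⟨ha.1.trans_lt hy.1, hy.2⟩).sub
      ((((hasDerivAt_const_mul (n : ℝ)).add_const 1).log
        (hpos (Ioo_subset_Icc_self hy)).ne').const_mul _))
    (fun y hy ↦ by
      have hy0 := ha.1.trans_lt hy.1
      rw [sub_nonneg, le_div_iff₀ hy0, mul_assoc, div_mul_eq_mul_div]
      exact fareyDensity_one_mul_le n ⟨hy0.le, hy.2.le⟩)
  simp only [mul_one, cdf_fareyLaw_one] at hle
  linarith

lemma cdf_fareyLaw_le_mul (n : ℕ) (ha : a ∈ Icc (0 : ℝ) 1) :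
    cdf (fareyLaw n) a ≤ (n + 1) * a := by
  induction n generalizing a with
  | zero => simp [cdf_fareyLaw_zero ha]
  | succ n ih =>
    have hs := div_one_add_mem_Icc ha
    have hr := one_div_one_add_mem_Icc ha
    have ha0 := ha.1
    have hleft : cdf (fareyLaw n) (a / (1 + a)) ≤ (n + 1) * a :=
      (ih ⟨hs.1, by linarith [hs.2]⟩).trans
        (mul_le_mul_of_nonneg_left (div_le_self ha0 (by linarith)) (by positivity))
    have hright : 1 - cdf (fareyLaw n) (1 / (1 + a)) ≤ a :=
      calc 1 - cdf (fareyLaw n) (1 / (1 + a))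
          ≤ fareyDensity n 1 * -Real.log (1 / (1 + a)) :=
            one_sub_cdf_fareyLaw_le n ⟨by positivity, hr.2⟩
        _ = fareyDensity n 1 * Real.log (1 + a) := by rw [one_div, Real.log_inv, neg_neg]
        _ ≤ 1 * Real.log (1 + a) :=
            mul_le_mul_of_nonneg_right (fareyDensity_one_le_one n)
              (Real.log_nonneg (by linarith))
        _ ≤ a := by linarith [Real.log_le_sub_one_of_pos (show 0 < 1 + a by positivity)]
    rw [cdf_fareyLaw_succ n ha]
    push_cast
    linarith

lemma fareyDensity_one_mul_log_le_one (n : ℕ) : fareyDensity n 1 * Real.log (n + 1) ≤ 1 := by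
  have h := le_one_sub_cdf_fareyLaw n (left_mem_Icc.2 zero_le_one)
  rw [mul_zero, zero_add, Real.log_one, sub_zero] at h
  linarith [cdf_nonneg (fareyLaw n) 0]

lemma one_sub_inv_le_fareyDensity_one_mul (n : ℕ) {K : ℝ} (hK : 1 ≤ K) :
    1 - K⁻¹ ≤ fareyDensity n 1 * (Real.log (n + 1) + Real.log K) := by
  have hK0 : 0 < K := by positivity
  have ha : ((n + 1) * K)⁻¹ ∈ Ioc (0 : ℝ) 1 :=
    ⟨by positivity, inv_le_one_of_one_le₀ (one_le_mul_of_one_le_of_one_le (by simp) hK)⟩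
  calc 1 - K⁻¹ = 1 - (n + 1) * ((n + 1) * K)⁻¹ := by field_simp
    _ ≤ 1 - cdf (fareyLaw n) ((n + 1) * K)⁻¹ :=
        sub_le_sub_left (cdf_fareyLaw_le_mul n (Ioc_subset_Icc_self ha)) 1
    _ ≤ fareyDensity n 1 * -Real.log ((n + 1) * K)⁻¹ := one_sub_cdf_fareyLaw_le n ha
    _ = fareyDensity n 1 * (Real.log (n + 1) + Real.log K) := by
        rw [Real.log_inv, neg_neg, Real.log_mul (by positivity) hK0.ne']

lemma tendsto_log_natCast_add_one : Tendsto (fun n : ℕ ↦ Real.log (n + 1)) atTop atTop :=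
  Real.tendsto_log_atTop.comp (tendsto_natCast_atTop_atTop.atTop_add tendsto_const_nhds)

lemma tendsto_fareyDensity_one_mul_log :
    Tendsto (fun n : ℕ ↦ fareyDensity n 1 * Real.log (n + 1)) atTop (𝓝 1) := by
  have hlower : Tendsto (fun L : ℝ ↦ (1 - L⁻¹) / (1 + Real.log L / L)) atTop (𝓝 1) := by
    have := (tendsto_inv_atTop_zero.const_sub 1).div
      (Real.isLittleO_log_id_atTop.tendsto_div_nhds_zero.const_add 1) (by norm_num)
    simpa [Pi.div_def] using this
  refine tendsto_of_tendsto_of_tendsto_of_le_of_le' (hlower.comp tendsto_log_natCast_add_one)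
    tendsto_const_nhds ?_ (.of_forall fareyDensity_one_mul_log_le_one)
  filter_upwards [tendsto_log_natCast_add_one.eventually_ge_atTop 1] with n hL
  have hL0 : 0 < Real.log (n + 1) := by positivity
  have hlogL : 0 ≤ Real.log (Real.log (n + 1)) := Real.log_nonneg hL
  rw [Function.comp_apply, div_le_iff₀ (by positivity), mul_assoc, mul_one_add,
    mul_div_cancel₀ _ hL0.ne']
  exact one_sub_inv_le_fareyDensity_one_mul n hL

lemma one_div_natCast_add_one_mem_Ioc (m : ℕ) : 1 / ((m : ℝ) + 1) ∈ Ioc (0 : ℝ) 1 :=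
  ⟨by positivity, (div_le_one (by positivity)).2 (by simp)⟩

lemma one_sub_cdf_fareyLaw_one_div_le (s m : ℕ) :
    1 - cdf (fareyLaw s) (1 / (m + 1)) ≤ fareyDensity s 1 * Real.log (m + 1) := by
  have h := one_sub_cdf_fareyLaw_le s (one_div_natCast_add_one_mem_Ioc m)
  rwa [one_div, Real.log_inv, neg_neg, ← one_div] at h

lemma le_one_sub_cdf_fareyLaw_one_div (s m : ℕ) :
    fareyDensity s 1 * (min (Real.log (s + 1)) (Real.log (m + 1)) - Real.log 2) ≤
      1 - cdf (fareyLaw s) (1 / (m + 1)) := by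
  refine le_trans (mul_le_mul_of_nonneg_left ?_ (fareyDensity_one_nonneg s))
    (le_one_sub_cdf_fareyLaw s (Ioc_subset_Icc_self (one_div_natCast_add_one_mem_Ioc m)))
  have hquot : Real.log (s * (1 / (m + 1)) + 1) =
      Real.log (s + m + 1) - Real.log (m + 1) := by
    rw [← Real.log_div (by positivity) (by positivity)]
    congr 1
    field_simp
    ring
  have hsum : Real.log (s + m + 1) ≤
      Real.log 2 + max (Real.log (s + 1)) (Real.log (m + 1)) := by
    have hs : 0 < (s + 1 : ℝ) := by positivity
    have hm : 0 < (m + 1 : ℝ) := by positivity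
    rw [← Real.strictMonoOn_log.monotoneOn.map_max hs hm,
      ← Real.log_mul two_ne_zero (lt_max_of_lt_left hs).ne']
    refine Real.log_le_log (by positivity) ?_
    linarith [le_max_left (s + 1 : ℝ) (m + 1), le_max_right (s + 1 : ℝ) (m + 1)]
  rw [hquot]
  linarith [min_add_max (Real.log (s + 1)) (Real.log (m + 1))]

theorem tendsto_one_sub_cdf_fareyLaw_one_div {ι : Type*} {l : Filter ι} {s m : ι → ℕ}
    (hs : Tendsto s l atTop)
    (ht : Tendsto (fun i ↦ Real.log (m i + 1) / Real.log (s i + 1)) l (𝓝 t)) :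
    Tendsto (fun i ↦ 1 - cdf (fareyLaw (s i)) (1 / (m i + 1))) l (𝓝 (min 1 t)) := by
  have hL := tendsto_log_natCast_add_one.comp hs
  have hD := tendsto_fareyDensity_one_mul_log.comp hs
  have hlower := hD.mul (((tendsto_const_nhds (x := (1 : ℝ))).min ht).sub
    (hL.const_div_atTop (Real.log 2)))
  have hupper := (tendsto_const_nhds (x := (1 : ℝ))).min (hD.mul ht)
  rw [sub_zero, one_mul] at hlower
  rw [one_mul] at hupper
  refine tendsto_of_tendsto_of_tendsto_of_le_of_le' hlower hupper ?_ ?_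
  · filter_upwards [hL.eventually_gt_atTop 0] with i (hi : 0 < Real.log (s i + 1))
    rw [Function.comp_apply, Function.comp_apply, mul_assoc, mul_sub,
      mul_min_of_nonneg _ _ hi.le, mul_one, mul_div_cancel₀ _ hi.ne', mul_div_cancel₀ _ hi.ne']
    exact le_one_sub_cdf_fareyLaw_one_div (s i) (m i)
  · filter_upwards [hL.eventually_gt_atTop 0] with i (hi : 0 < Real.log (s i + 1))
    refine le_min (sub_le_self 1 (cdf_nonneg _ _)) ?_
    rw [Function.comp_apply, mul_assoc, mul_div_cancel₀ _ hi.ne']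
    exact one_sub_cdf_fareyLaw_one_div_le (s i) (m i)

/-! ### Digit sums along the Farey map -/

lemma cfDigitSum_zero (x : ℝ) : cfDigitSum x 0 = 0 := rfl

lemma cfDigitSum_succ (x : ℝ) (k : ℕ) :
    cfDigitSum x (k + 1) = ⌊1 / x⌋₊ + cfDigitSum (gaussMap x) k := by
  simp only [cfDigitSum, Finset.sum_range_succ', Function.iterate_succ_apply,
    Function.iterate_zero_apply, Int.floor_toNat, add_comm]

lemma Xproc_le_iff (n s : ℕ) (x : ℝ) :
    Xproc n x ≤ s ↔ ∀ k, cfDigitSum x k ≤ n → cfDigitSum x k ≤ s := by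
  rw [Xproc, csSup_le_iff' ⟨n, fun _ hm ↦ hm.1⟩]
  exact ⟨fun h k hk ↦ h _ ⟨hk, k, rfl⟩, fun h _ ⟨hn, k, hk⟩ ↦ hk ▸ h k (hk ▸ hn)⟩

lemma Xproc_le (n : ℕ) (x : ℝ) : Xproc n x ≤ n := (Xproc_le_iff n n x).2 fun _ ↦ id

lemma cfDigitSum_fareyMap_add_one (hx0 : 0 < x) (hx : x ≤ 1 / 2) (k : ℕ) :
    cfDigitSum (fareyMap x) (k + 1) + 1 = cfDigitSum x (k + 1) := by
  have hinv : 1 / fareyMap x = 1 / x - 1 := by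
    rw [fareyMap, if_pos hx, one_div_div]
    field_simp
  have hne : fareyMap x ≠ 0 := by
    rw [fareyMap, if_pos hx]
    exact (div_pos hx0 (by linarith)).ne'
  have hgauss : gaussMap (fareyMap x) = gaussMap x := by
    rw [gaussMap, gaussMap, if_neg hne, if_neg hx0.ne', hinv, Int.fract_sub_one]
  have hdigit : ⌊1 / fareyMap x⌋₊ + 1 = ⌊1 / x⌋₊ := by
    have : 1 ≤ ⌊1 / x⌋₊ := Nat.le_floor ((le_div_iff₀ hx0).2 (by push_cast; linarith))
    rw [hinv, Nat.floor_sub_one, Nat.sub_add_cancel this]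
  rw [cfDigitSum_succ, cfDigitSum_succ, hgauss, ← hdigit]
  ring

lemma cfDigitSum_succ_of_half_lt (hx : 1 / 2 < x) (hx1 : x ≤ 1) (k : ℕ) :
    cfDigitSum x (k + 1) = 1 + cfDigitSum (fareyMap x) k := by
  have hx0 : 0 < x := by linarith
  have hfloor : ⌊1 / x⌋ = 1 := by
    rw [Int.floor_eq_iff, le_div_iff₀ hx0, div_lt_iff₀ hx0]
    push_cast
    constructor <;> linarith
  have hgauss : gaussMap x = fareyMap x := by
    rw [gaussMap, if_neg hx0.ne', fareyMap, if_neg hx.not_ge, Int.fract, hfloor]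
    push_cast
    field_simp
  rw [cfDigitSum_succ, hgauss, ← Int.floor_toNat, hfloor, Int.toNat_one]

lemma cfDigitSum_zero_left (k : ℕ) : cfDigitSum 0 k = 0 := by
  induction k with
  | zero => rfl
  | succ k ih => simp [cfDigitSum_succ, gaussMap, ih]

lemma Xproc_succ_le_succ_iff (n s : ℕ) (hx : x ∈ Icc (0 : ℝ) 1) :
    Xproc (n + 1) x ≤ s + 1 ↔ Xproc n (fareyMap x) ≤ s := by
  rw [Xproc_le_iff, Xproc_le_iff]
  rcases hx.1.eq_or_lt with rfl | hx0
  · simp [fareyMap, cfDigitSum_zero_left]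
  rcases le_or_gt x (1 / 2) with hx2 | hx2
  · refine forall_congr' fun k ↦ ?_
    cases k with
    | zero => simp [cfDigitSum_zero]
    | succ k =>
      rw [← cfDigitSum_fareyMap_add_one hx0 hx2]
      lia
  · have hsucc := cfDigitSum_succ_of_half_lt hx2 hx.2
    constructor
    · intro h k hk
      have := h (k + 1)
      rw [hsucc] at this
      lia
    · rintro h (_ | k) hk
      · simp [cfDigitSum_zero]
      · rw [hsucc] at hk ⊢
        have := h k
        lia

lemma Xproc_le_zero_iff (m : ℕ) (hx : x ∈ Icc (0 : ℝ) 1) : Xproc m x ≤ 0 ↔ x ≤ 1 / (m + 1) := by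
  rcases hx.1.eq_or_lt with rfl | hx0
  · exact iff_of_true ((Xproc_le_iff _ _ _).2 fun k _ ↦ (cfDigitSum_zero_left k).le)
      (by positivity)
  have hfloor : x ≤ 1 / (m + 1) ↔ m + 1 ≤ ⌊1 / x⌋₊ := by
    rw [Nat.le_floor_iff (by positivity), le_div_comm₀ hx0 (by positivity)]
    push_cast
    rfl
  have hfloor1 : 1 ≤ ⌊1 / x⌋₊ := Nat.le_floor ((le_div_iff₀ hx0).2 (by simpa using hx.2))
  rw [hfloor, Xproc_le_iff]
  constructor
  · intro h
    have := h 1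
    rw [cfDigitSum_succ, cfDigitSum_zero] at this
    lia
  · rintro h (_ | k) hk
    · rfl
    · rw [cfDigitSum_succ] at hk
      lia

lemma Xproc_add_le_iff (s m : ℕ) (hx : x ∈ Icc (0 : ℝ) 1) :
    Xproc (s + m) x ≤ s ↔ fareyMap^[s] x ≤ 1 / (m + 1) := by
  induction s generalizing x with
  | zero => rw [zero_add, Xproc_le_zero_iff m hx, Function.iterate_zero_apply]
  | succ s ih =>
    rw [add_right_comm, Xproc_succ_le_succ_iff _ _ hx, ih (fareyMap_mem_Icc hx),
      Function.iterate_succ_apply]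

lemma volume_real_lt_Xproc_add (s m : ℕ) :
    volume.real {x ∈ Icc (0 : ℝ) 1 | s < Xproc (s + m) x} =
      1 - cdf (fareyLaw s) (1 / (m + 1)) := by
  have hF := measurable_fareyMap.iterate s
  rw [cdf_eq_real, ← probReal_compl_eq_one_sub measurableSet_Iic, fareyLaw,
    map_measureReal_apply hF measurableSet_Iic.compl,
    measureReal_restrict_apply (hF measurableSet_Iic.compl), inter_comm]
  congr 1
  ext x
  refine and_congr_right fun hx ↦ ?_
  rw [← not_le, Xproc_add_le_iff s m hx]
  rfl

/-! ### Logarithms of comparable sequences -/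

section LogAsymptotics

variable {ι : Type*} {l : Filter ι} {u v L : ι → ℝ}

lemma exists_log_le_log_add_of_isBigO (huv : u =O[l] v) (hu : ∀ᶠ i in l, u i ≠ 0) :
    ∃ C, ∀ᶠ i in l, Real.log (u i) ≤ Real.log (v i) + C := by
  obtain ⟨c, hc, hcuv⟩ := huv.exists_pos
  refine ⟨Real.log c, ?_⟩
  filter_upwards [hcuv.bound, hu] with i hi hui
  have hui' : 0 < |u i| := abs_pos.2 hui
  have hvi : 0 < |v i| := pos_of_mul_pos_right (hui'.trans_le hi) hc.le
  rw [← Real.log_abs (u i), ← Real.log_abs (v i), ← Real.log_mul hvi.ne' hc.ne', mul_comm]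
  exact Real.log_le_log hui' hi

lemma tendsto_log_div_of_isTheta (huv : u =Θ[l] v) (hv : ∀ᶠ i in l, v i ≠ 0)
    (hL : Tendsto L l atTop) (ht : Tendsto (fun i ↦ Real.log (v i) / L i) l (𝓝 t)) :
    Tendsto (fun i ↦ Real.log (u i) / L i) l (𝓝 t) := by
  have hu : ∀ᶠ i in l, u i ≠ 0 := by
    filter_upwards [huv.eq_zero_iff, hv] with i hi hvi using mt hi.1 hvi
  obtain ⟨B, hB⟩ := exists_log_le_log_add_of_isBigO huv.isBigO hu
  obtain ⟨C, hC⟩ := exists_log_le_log_add_of_isBigO huv.symm.isBigO hv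
  have hdiff : Tendsto (fun i ↦ (Real.log (u i) - Real.log (v i)) / L i) l (𝓝 0) :=
    tendsto_bdd_div_atTop_nhds_zero (b := -C) (B := B) (hC.mono fun i hi ↦ by linarith)
      (hB.mono fun i hi ↦ by linarith) hL
  simpa [← add_div] using hdiff.add ht

lemma isTheta_natFloor_add (hu : ∀ᶠ i in l, 1 ≤ u i) (k : ℕ) :
    (fun i ↦ ((⌊u i⌋₊ + k : ℕ) : ℝ)) =Θ[l] u := by
  constructor
  · refine .of_bound (1 + k) (hu.mono fun i hi ↦ ?_)
    have hfloor := Nat.floor_le (zero_le_one.trans hi)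
    rw [Real.norm_of_nonneg (by positivity), Real.norm_of_nonneg (by positivity)]
    push_cast
    nlinarith [(Nat.cast_nonneg k : (0 : ℝ) ≤ k)]
  · refine .of_bound 2 (hu.mono fun i hi ↦ ?_)
    have hfloor : (1 : ℝ) ≤ ⌊u i⌋₊ := by exact_mod_cast Nat.floor_pos.2 hi
    rw [Real.norm_of_nonneg (by positivity), Real.norm_of_nonneg (by positivity)]
    push_cast
    linarith [Nat.lt_floor_add_one (u i), (Nat.cast_nonneg k : (0 : ℝ) ≤ k)]

end LogAsymptotics

lemma isEquivalent_natCast_sub {q : ℕ → ℕ}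
    (hq : (fun n ↦ (q n : ℝ)) =o[atTop] Nat.cast (R := ℝ)) :
    (fun n ↦ ((n - q n : ℕ) : ℝ)) ~[atTop] Nat.cast := by
  refine IsBigO.trans_isLittleO (.of_norm_le fun n ↦ ?_) hq
  have hle : ((n - q n : ℕ) : ℝ) ≤ n := by exact_mod_cast n.sub_le (q n)
  have hge : (n : ℝ) ≤ (n - q n : ℕ) + q n := by exact_mod_cast le_tsub_add
  rw [Pi.sub_apply, Real.norm_eq_abs, abs_le]
  constructor <;> linarith

lemma tendsto_log_natCast_div_log_natCast_of_rpow {s m : ℕ → ℕ}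
    (hs : (fun n ↦ (s n : ℝ)) ~[atTop] Nat.cast)
    (hm : (fun n ↦ (m n + 1 : ℝ)) =Θ[atTop] fun n ↦ (n : ℝ) ^ t) :
    Tendsto (fun n ↦ Real.log (m n + 1) / Real.log (s n + 1)) atTop (𝓝 t) := by
  have hL : Tendsto (fun n : ℕ ↦ Real.log n) atTop atTop :=
    Real.tendsto_log_atTop.comp tendsto_natCast_atTop_atTop
  have hs1 : (fun n ↦ (s n + 1 : ℝ)) ~[atTop] Nat.cast :=
    hs.add_isLittleO (isLittleO_const_left.2
      (.inr (tendsto_norm_atTop_atTop.comp tendsto_natCast_atTop_atTop)))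
  have hlogs : Tendsto (fun n ↦ Real.log (s n + 1) / Real.log n) atTop (𝓝 1) := by
    refine tendsto_log_div_of_isTheta hs1.isTheta ?_ hL (tendsto_const_nhds.congr' ?_)
    · filter_upwards [eventually_gt_atTop 0] with n hn using by positivity
    · filter_upwards [hL.eventually_gt_atTop 0] with n hn using (div_self hn.ne').symm
  have hlogm : Tendsto (fun n ↦ Real.log (m n + 1) / Real.log n) atTop (𝓝 t) := by
    refine tendsto_log_div_of_isTheta hm ?_ hL (tendsto_const_nhds.congr' ?_)
    · filter_upwards [eventually_gt_atTop 0] with n hn using by positivity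
    · filter_upwards [hL.eventually_gt_atTop 0, eventually_gt_atTop 0] with n hn hn0
      rw [Real.log_rpow (by positivity), mul_div_cancel_right₀ _ hn.ne']
  have hdiv := hlogm.div hlogs one_ne_zero
  rw [div_one] at hdiv
  refine hdiv.congr' ?_
  filter_upwards [hL.eventually_gt_atTop 0] with n hn
  exact div_div_div_cancel_right₀ hn.ne' _ _

lemma log_sub_div_log_le_iff {X : ℕ} (hn : 2 ≤ n) (ht : 0 ≤ t) (hX : X ≤ n) :
    Real.log ((n : ℝ) - X) / Real.log n ≤ t ↔ n - X ≤ ⌊(n : ℝ) ^ t⌋₊ := by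
  have hn1 : 1 < (n : ℝ) := by exact_mod_cast hn
  have hpow : 1 ≤ (n : ℝ) ^ t := Real.one_le_rpow hn1.le ht
  rw [Nat.le_floor_iff (by positivity), Nat.cast_sub hX, div_le_iff₀ (Real.log_pos hn1),
    ← Real.log_rpow (by positivity)]
  rcases hX.eq_or_lt with rfl | hX
    -- Here Lean reads the logarithm as `log 0 = 0`, and both sides hold.
  · rw [sub_self, Real.log_zero]
    exact iff_of_true (Real.log_nonneg hpow) (zero_le_one.trans hpow)
  · exact Real.log_le_log_iff (sub_pos.2 (by exact_mod_cast hX)) (by positivity)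

lemma isTheta_natFloor_rpow_add (ht : 0 ≤ t) (k : ℕ) :
    (fun n : ℕ ↦ ((⌊(n : ℝ) ^ t⌋₊ + k : ℕ) : ℝ)) =Θ[atTop] fun n ↦ (n : ℝ) ^ t := by
  refine isTheta_natFloor_add ?_ k
  filter_upwards [eventually_ge_atTop 1] with n hn
  exact Real.one_le_rpow (by exact_mod_cast hn) ht

lemma isLittleO_natCast_rpow (ht : t < 1) :
    (fun n : ℕ ↦ (n : ℝ) ^ t) =o[atTop] Nat.cast (R := ℝ) := by
  have hratio : Tendsto (fun n : ℕ ↦ (n : ℝ) ^ (-(1 - t))) atTop (𝓝 0) :=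
    (tendsto_rpow_neg_atTop (sub_pos.2 ht)).comp tendsto_natCast_atTop_atTop
  have hn0 : ∀ᶠ n : ℕ in atTop, (n : ℝ) ≠ 0 :=
    (eventually_ne_atTop 0).mono fun n hn ↦ Nat.cast_ne_zero.2 hn
  rw [isLittleO_iff_tendsto' (hn0.mono fun n hn h ↦ absurd h hn)]
  refine hratio.congr' (hn0.mono fun n hn ↦ ?_)
  rw [neg_sub, Real.rpow_sub_one hn]

lemma isLittleO_natFloor_rpow_add (ht0 : 0 ≤ t) (ht1 : t < 1) (k : ℕ) :
    (fun n : ℕ ↦ ((⌊(n : ℝ) ^ t⌋₊ + k : ℕ) : ℝ)) =o[atTop] Nat.cast (R := ℝ) :=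
  (isTheta_natFloor_rpow_add ht0 k).trans_isLittleO (isLittleO_natCast_rpow ht1)

lemma log_sub_Xproc_div_log_le_one (hn : 2 ≤ n) (x : ℝ) :
    Real.log ((n : ℝ) - Xproc n x) / Real.log n ≤ 1 := by
  rw [log_sub_div_log_le_iff hn zero_le_one (Xproc_le n x), Real.rpow_one, Nat.floor_natCast]
  exact n.sub_le _

lemma volume_real_log_sub_Xproc_div_log_le (hn : 2 ≤ n) (ht : 0 ≤ t)
    (hm : ⌊(n : ℝ) ^ t⌋₊ + 1 ≤ n) :
    volume.real {x ∈ Icc (0 : ℝ) 1 | Real.log ((n : ℝ) - Xproc n x) / Real.log n ≤ t} =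
      1 - cdf (fareyLaw (n - (⌊(n : ℝ) ^ t⌋₊ + 1))) (1 / ((⌊(n : ℝ) ^ t⌋₊ + 1 : ℕ) + 1)) := by
  rw [← volume_real_lt_Xproc_add, Nat.sub_add_cancel hm]
  congr 1
  ext x
  refine and_congr_right fun _ ↦ ?_
  rw [log_sub_div_log_le_iff hn ht (Xproc_le n x)]
  lia

/-- Uniform law: `log(n - Xₙ)/log n` converges in distribution (w.r.t. Lebesgue measure
on `[0,1]`) to a random variable uniformly distributed on `[0,1]`. -/
theorem uniform_law_for_digit_sums :
    ∀ t ∈ Set.Icc (0 : ℝ) 1,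
      Tendsto (fun n : ℕ =>
          (volume {x ∈ Set.Icc (0 : ℝ) 1 |
            Real.log ((n : ℝ) - (Xproc n x : ℝ)) / Real.log n ≤ t}).toReal)
        atTop (nhds t) := by
  rintro t ⟨ht0, ht1⟩
  rcases ht1.eq_or_lt with rfl | ht1
  · refine tendsto_const_nhds.congr' ?_
    filter_upwards [eventually_ge_atTop 2] with n hn
    simp only [log_sub_Xproc_div_log_le_one hn, and_true, ofPred_mem_eq, Real.volume_Icc,
      sub_zero, ENNReal.ofReal_one, ENNReal.toReal_one]
  have hm := isLittleO_natFloor_rpow_add ht0 ht1 1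
  have hs := isEquivalent_natCast_sub hm
  have hm1 := isTheta_natFloor_rpow_add ht0 2
  have hlim := tendsto_one_sub_cdf_fareyLaw_one_div
    (tendsto_natCast_atTop_iff.1 (hs.symm.tendsto_atTop tendsto_natCast_atTop_atTop))
    (tendsto_log_natCast_div_log_natCast_of_rpow hs (by exact_mod_cast hm1))
  rw [min_eq_right ht1.le] at hlim
  refine hlim.congr' ?_
  filter_upwards [eventually_ge_atTop 2, hm.eventuallyLE] with n hn hmn
  rw [Real.norm_natCast, Real.norm_natCast, Nat.cast_le] at hmn
  exact (volume_real_log_sub_Xproc_div_log_le hn ht0 hmn).symm
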